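/- Basis functions for the second enriched triple: with the setting of the second family (affinely independent v₁, v₂, v₃, barycentric coordinates λᵢ, edge parametrizations γⱼ, density g̃_{σ,μ}, polynomial q_{σ,μ}, μ ≥ 1, σ > 0), define ηᵢ = 1 - 2λᵢ and ρᵢ = -C_{σ,μ} ηᵢ + (2/‖q_{σ,μ}‖²_{2,σ,μ})(-λᵢ² + λ_{i+1}² + λ_{i+2}²) for i = 1,2,3, where ‖q_{σ,μ}‖²_{2,σ,μ} = ∫_{-1}^{1} q_{σ,μ}(t)² g̃_{σ,μ}(t) dt and C_{σ,μ} = (1 + s_{2,σ,μ})/‖q_{σ,μ}‖²_{2,σ,μ}. Then for all i, j ∈ {1,2,3}: D_j(ηᵢ) = δᵢⱼ, S_j(ηᵢ) = 0, D_j(ρᵢ) = 0, and S_j(ρᵢ) = δᵢⱼ, where D_j(f) = ∫_{-1}^{1} f(γⱼ(t)) g̃_{σ,μ}(t) dt and S_j(f) = ∫_{-1}^{1} q_{σ,μ}(t) f(γⱼ(t)) g̃_{σ,μ}(t) dt. -/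

import Mathlib

open MeasureTheory

/-- Lower incomplete gamma function `γ(s,z) = ∫₀^z u^(s-1) e^(-u) du`. -/
noncomputable def lowGamma (s z : ℝ) : ℝ := ∫ u in (0:ℝ)..z, u ^ (s - 1) * Real.exp (-u)

/-- Modified lower incomplete gamma function `γ^mod(s,z) = γ(s,z)/z^s`. -/
noncomputable def gammaMod (s z : ℝ) : ℝ := lowGamma s z / z ^ s

/-- Second family of densities `g̃_{σ,μ}` on `[-1,1]`. -/
noncomputable def gTilde (σ μ t : ℝ) : ℝ :=
  ((2 * μ - 1) / gammaMod (1 / 2) (1 / (2 * σ ^ (4 * μ - 2)))) *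
    (t ^ 2) ^ (μ - 1) * Real.exp (-(1 / 2) * (t ^ 2 / σ ^ 2) ^ (2 * μ - 1))

/-- Second moment `s_{2,σ,μ}` of `g̃_{σ,μ}`. -/
noncomputable def sMom2 (σ μ : ℝ) : ℝ := ∫ t in (-1:ℝ)..1, t ^ 2 * gTilde σ μ t

/-- The orthogonal quadratic polynomial `q_{σ,μ}(t) = t² - s_{2,σ,μ}`. -/
noncomputable def qPoly (σ μ t : ℝ) : ℝ := t ^ 2 - sMom2 σ μ

/-- The squared norm `‖q_{σ,μ}‖²_{2,σ,μ}`. -/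
noncomputable def qNormSq (σ μ : ℝ) : ℝ :=
  ∫ t in (-1:ℝ)..1, (qPoly σ μ t) ^ 2 * gTilde σ μ t

/-- The coefficient `C_{σ,μ} = (1 + s_{2,σ,μ})/‖q_{σ,μ}‖²_{2,σ,μ}`. -/
noncomputable def Ccoef (σ μ : ℝ) : ℝ := (1 + sMom2 σ μ) / qNormSq σ μ

/-- Parametrization of the edge `s_j` of the triangle, opposite to the vertex `v j`
(indices taken cyclically in `Fin 3`). -/
noncomputable def edgeParam (v : Fin 3 → ℝ × ℝ) (j : Fin 3) (t : ℝ) : ℝ × ℝ :=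
  ((1 + t) / 2) • v (j + 1) + ((1 - t) / 2) • v (j + 2)

/-- The basis function `ηᵢ = 1 - 2λᵢ`. -/
def etaB (lam : Fin 3 → ℝ × ℝ → ℝ) (i : Fin 3) (x : ℝ × ℝ) : ℝ := 1 - 2 * lam i x

/-- The basis function
`ρᵢ = -C_{σ,μ} ηᵢ + (2/‖q_{σ,μ}‖²_{2,σ,μ})(-λᵢ² + λ_{i+1}² + λ_{i+2}²)`. -/
noncomputable def rhoB (σ μ : ℝ) (lam : Fin 3 → ℝ × ℝ → ℝ) (i : Fin 3) (x : ℝ × ℝ) : ℝ :=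
  -Ccoef σ μ * etaB lam i x
    + (2 / qNormSq σ μ) * (-(lam i x) ^ 2 + (lam (i + 1) x) ^ 2 + (lam (i + 2) x) ^ 2)

noncomputable def hAux (σ μ t : ℝ) : ℝ :=
  (t ^ 2) ^ (μ - 1) * Real.exp (-(1 / 2) * (t ^ 2 / σ ^ 2) ^ (2 * μ - 1))

theorem hAux_cont (σ μ : ℝ) (hμ : 1 ≤ μ) : Continuous (hAux σ μ) := by
  unfold hAux
  refine Continuous.mul ?_ (Real.continuous_exp.comp (continuous_const.mul ?_))
  · exact (continuous_id.pow 2).rpow_const (fun _ => Or.inr (by linarith))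
  · exact ((continuous_id.pow 2).div_const _).rpow_const (fun _ => Or.inr (by linarith))

theorem hAux_neg (σ μ t : ℝ) : hAux σ μ (-t) = hAux σ μ t := by
  simp [hAux]

theorem hAux_pos (σ μ t : ℝ) (ht : t ≠ 0) : 0 < hAux σ μ t := by
  unfold hAux
  positivity

theorem subst_key (σ μ : ℝ) (hσ : 0 < σ) (hμ : 1 ≤ μ) (t : ℝ) (ht : 0 < t) (z : ℝ)
    (hz : z = 1 / (2 * σ ^ (4 * μ - 2))) :
    ((z * t ^ (4 * μ - 2)) ^ ((1:ℝ) / 2 - 1) * Real.exp (-(z * t ^ (4 * μ - 2)))) *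
      (z * ((4 * μ - 2) * t ^ (4 * μ - 2 - 1))) =
    z ^ ((1:ℝ) / 2) * (4 * μ - 2) * hAux σ μ t := by
  have hzp : 0 < z := by rw [hz]; positivity
  have e1 : -(1 / 2) * (t ^ 2 / σ ^ 2) ^ (2 * μ - 1) = -(z * t ^ (4 * μ - 2)) := by
    rw [Real.div_rpow (by positivity) (by positivity), ← Real.rpow_natCast t 2,
      ← Real.rpow_natCast σ 2, ← Real.rpow_mul ht.le, ← Real.rpow_mul hσ.le, hz]
    have : ((2:ℕ):ℝ) * (2 * μ - 1) = 4 * μ - 2 := by push_cast; ring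
    rw [this]
    field_simp
  have e2 : (t ^ 2) ^ (μ - 1) = t ^ (2 * μ - 2) := by
    rw [← Real.rpow_natCast t 2, ← Real.rpow_mul ht.le]
    congr 1; push_cast; ring
  have e3 : (z * t ^ (4 * μ - 2)) ^ ((1:ℝ) / 2 - 1)
      = z ^ ((1:ℝ) / 2 - 1) * t ^ (-(2 * μ - 1)) := by
    rw [Real.mul_rpow hzp.le (by positivity), ← Real.rpow_mul ht.le]
    congr 2; ring
  have e4 : z ^ ((1:ℝ) / 2) = z ^ ((1:ℝ) / 2 - 1) * z := by
    rw [Real.rpow_sub_one hzp.ne']; field_simp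
  have e5 : t ^ (2 * μ - 2) = t ^ (-(2 * μ - 1)) * t ^ (4 * μ - 2 - 1) := by
    rw [← Real.rpow_add ht]; congr 1; ring
  unfold hAux
  rw [e1, e2, e3, e4, e5]
  ring

theorem lowGamma_eq (σ μ : ℝ) (hσ : 0 < σ) (hμ : 1 ≤ μ) (z : ℝ)
    (hz : z = 1 / (2 * σ ^ (4 * μ - 2))) :
    lowGamma (1 / 2) z = z ^ ((1:ℝ) / 2) * (4 * μ - 2) * ∫ t in (0:ℝ)..1, hAux σ μ t := by
  have hzp : 0 < z := by rw [hz]; positivity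
  have hcf : Continuous (fun t : ℝ => z * t ^ (4 * μ - 2)) :=
    continuous_const.mul (continuous_id.rpow_const (fun _ => Or.inr (by linarith)))
  have hEq : Set.EqOn (fun x => ((fun u : ℝ => u ^ ((1:ℝ) / 2 - 1) * Real.exp (-u)) ∘
      (fun t : ℝ => z * t ^ (4 * μ - 2))) x * (z * ((4 * μ - 2) * x ^ (4 * μ - 2 - 1))))
      (fun t => z ^ ((1:ℝ) / 2) * (4 * μ - 2) * hAux σ μ t) (Set.Ioc 0 1) := by
    intro t ht
    exact subst_key σ μ hσ hμ t ht.1 z hz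
  have hKc : Continuous (fun t => z ^ ((1:ℝ) / 2) * (4 * μ - 2) * hAux σ μ t) :=
    continuous_const.mul (hAux_cont σ μ hμ)
  have := intervalIntegral.integral_comp_mul_deriv''' (a := 0) (b := 1)
    (f := fun t : ℝ => z * t ^ (4 * μ - 2))
    (f' := fun x => z * ((4 * μ - 2) * x ^ (4 * μ - 2 - 1)))
    (g := fun u : ℝ => u ^ ((1:ℝ) / 2 - 1) * Real.exp (-u))
    hcf.continuousOn ?_ ?_ ?_ ?_
  · have h0 : (0:ℝ) ^ (4 * μ - 2) = 0 := Real.zero_rpow (by linarith)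
    simp only [h0, mul_zero, Real.one_rpow, mul_one] at this
    unfold lowGamma
    rw [← this, ← intervalIntegral.integral_const_mul,
      intervalIntegral.integral_of_le zero_le_one, intervalIntegral.integral_of_le zero_le_one]
    exact setIntegral_congr_fun measurableSet_Ioc hEq
  · intro x hx
    simp only [zero_le_one, min_eq_left, max_eq_right] at hx
    exact ((Real.hasDerivAt_rpow_const (Or.inl hx.1.ne')).const_mul z).hasDerivWithinAt
  · rintro _ ⟨x, hx, rfl⟩
    simp only [zero_le_one, min_eq_left, max_eq_right] at hx
    have hp : 0 < z * x ^ (4 * μ - 2) := mul_pos hzp (Real.rpow_pos_of_pos hx.1 _)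
    apply ContinuousAt.continuousWithinAt
    exact (Real.continuousAt_rpow_const _ _ (Or.inl hp.ne')).mul
      (Real.continuous_exp.comp continuous_neg).continuousAt
  · have hsub : (fun t : ℝ => z * t ^ (4 * μ - 2)) '' Set.uIcc 0 1 ⊆ Set.uIcc 0 z := by
      rintro _ ⟨x, hx, rfl⟩
      rw [Set.uIcc_of_le zero_le_one] at hx
      rw [Set.uIcc_of_le hzp.le]
      refine ⟨mul_nonneg hzp.le (Real.rpow_nonneg hx.1 _), ?_⟩
      exact mul_le_of_le_one_right hzp.le (Real.rpow_le_one hx.1 hx.2 (by linarith))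
    refine IntegrableOn.mono_set ?_ hsub
    have hi : IntervalIntegrable (fun u : ℝ => u ^ ((1:ℝ) / 2 - 1) * Real.exp (-u)) volume 0 z :=
      (intervalIntegral.intervalIntegrable_rpow' (by norm_num)).mul_continuousOn
        (Real.continuous_exp.comp continuous_neg).continuousOn
    rw [Set.uIcc_of_le hzp.le]
    exact (intervalIntegrable_iff_integrableOn_Icc_of_le hzp.le).1 hi
  · rw [Set.uIcc_of_le zero_le_one, integrableOn_Icc_iff_integrableOn_Ioc]
    exact (hKc.integrableOn_Ioc).congr_fun hEq.symm measurableSet_Ioc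

theorem int_even (σ μ : ℝ) (hμ : 1 ≤ μ) :
    ∫ t in (-1:ℝ)..1, hAux σ μ t = 2 * ∫ t in (0:ℝ)..1, hAux σ μ t := by
  have hc := hAux_cont σ μ hμ
  rw [← intervalIntegral.integral_add_adjacent_intervals (b := 0)
    (hc.intervalIntegrable _ _) (hc.intervalIntegrable _ _)]
  have h := intervalIntegral.integral_comp_neg (a := 0) (b := 1) (hAux σ μ)
  simp only [hAux_neg, neg_zero] at h
  rw [← h]; ring

theorem hAux_int_pos (σ μ : ℝ) (hμ : 1 ≤ μ) : 0 < ∫ t in (0:ℝ)..1, hAux σ μ t :=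
  intervalIntegral.intervalIntegral_pos_of_pos_on ((hAux_cont σ μ hμ).intervalIntegrable _ _)
    (fun x hx => hAux_pos σ μ x hx.1.ne') zero_lt_one

theorem gammaMod_eq (σ μ : ℝ) (hσ : 0 < σ) (hμ : 1 ≤ μ) :
    gammaMod (1 / 2) (1 / (2 * σ ^ (4 * μ - 2)))
      = (4 * μ - 2) * ∫ t in (0:ℝ)..1, hAux σ μ t := by
  unfold gammaMod
  rw [lowGamma_eq σ μ hσ hμ _ rfl]
  have : 0 < (1 / (2 * σ ^ (4 * μ - 2))) ^ ((1:ℝ) / 2) := by positivity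
  field_simp

theorem gTilde_eq (σ μ t : ℝ) : gTilde σ μ t =
    ((2 * μ - 1) / gammaMod (1 / 2) (1 / (2 * σ ^ (4 * μ - 2)))) * hAux σ μ t := by
  unfold gTilde hAux; ring

theorem gTilde_cont (σ μ : ℝ) (hμ : 1 ≤ μ) : Continuous (gTilde σ μ) := by
  rw [funext (gTilde_eq σ μ)]
  exact continuous_const.mul (hAux_cont σ μ hμ)

theorem gTilde_neg (σ μ t : ℝ) : gTilde σ μ (-t) = gTilde σ μ t := by
  simp [gTilde]

theorem gTilde_pos (σ μ t : ℝ) (hσ : 0 < σ) (hμ : 1 ≤ μ) (ht : t ≠ 0) : 0 < gTilde σ μ t := by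
  rw [gTilde_eq, gammaMod_eq σ μ hσ hμ]
  exact mul_pos (div_pos (by linarith) (mul_pos (by linarith) (hAux_int_pos σ μ hμ)))
    (hAux_pos σ μ t ht)

theorem gTilde_int (σ μ : ℝ) (hσ : 0 < σ) (hμ : 1 ≤ μ) :
    ∫ t in (-1:ℝ)..1, gTilde σ μ t = 1 := by
  simp only [gTilde_eq]
  rw [intervalIntegral.integral_const_mul, int_even σ μ hμ, gammaMod_eq σ μ hσ hμ]
  have h1 := (hAux_int_pos σ μ hμ).ne'
  have h2 : 2 * μ - 1 ≠ 0 := by linarith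
  have h3 : 4 * μ - 2 = 2 * (2 * μ - 1) := by ring
  rw [h3]
  field_simp

theorem odd_int (f : ℝ → ℝ) (hf : ∀ t, f (-t) = - f t) : ∫ t in (-1:ℝ)..1, f t = 0 := by
  have h := intervalIntegral.integral_comp_neg (a := -1) (b := 1) f
  simp only [hf, neg_neg, intervalIntegral.integral_neg] at h
  linarith

theorem qInt (σ μ : ℝ) (hσ : 0 < σ) (hμ : 1 ≤ μ) :
    ∫ t in (-1:ℝ)..1, qPoly σ μ t * gTilde σ μ t = 0 := by
  have hc := gTilde_cont σ μ hμ
  simp only [qPoly, sub_mul]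
  rw [intervalIntegral.integral_sub, intervalIntegral.integral_const_mul, gTilde_int σ μ hσ hμ]
  · simp [sMom2]
  · exact ((continuous_id.pow 2).mul hc).intervalIntegrable _ _
  · exact (continuous_const.mul hc).intervalIntegrable _ _

theorem qNormSq_pos (σ μ : ℝ) (hσ : 0 < σ) (hμ : 1 ≤ μ) : 0 < qNormSq σ μ := by
  have hc := gTilde_cont σ μ hμ
  have hn : ∀ t, 0 ≤ gTilde σ μ t := by
    intro t
    rw [gTilde_eq, gammaMod_eq σ μ hσ hμ]
    refine mul_nonneg (div_nonneg (by linarith)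
      (mul_nonneg (by linarith) (hAux_int_pos σ μ hμ).le)) ?_
    unfold hAux; positivity
  have hq : Continuous (qPoly σ μ) := by unfold qPoly; fun_prop
  unfold qNormSq
  refine intervalIntegral.integral_pos (by norm_num) ((hq.pow 2).mul hc).continuousOn
    (fun x _ => mul_nonneg (sq_nonneg _) (hn x)) ?_
  by_cases h : qPoly σ μ 1 = 0
  · refine ⟨1 / 2, by norm_num, mul_pos (sq_pos_of_ne_zero ?_)
      (gTilde_pos σ μ _ hσ hμ (by norm_num))⟩
    unfold qPoly at *
    intro h'
    linarith
  · exact ⟨1, by norm_num, mul_pos (sq_pos_of_ne_zero h) (gTilde_pos σ μ _ hσ hμ (by norm_num))⟩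

theorem affine_edge (A : (ℝ × ℝ) →ᵃ[ℝ] ℝ) (v : Fin 3 → ℝ × ℝ) (j : Fin 3) (t : ℝ) :
    A (edgeParam v j t) = (1 + t) / 2 * A (v (j + 1)) + (1 - t) / 2 * A (v (j + 2)) := by
  have h : edgeParam v j t = AffineMap.lineMap (v (j + 2)) (v (j + 1)) ((1 + t) / 2) := by
    rw [AffineMap.lineMap_apply_module, edgeParam, add_comm]
    congr 2; ring
  rw [h, AffineMap.apply_lineMap, AffineMap.lineMap_apply_module]
  simp only [smul_eq_mul]; ring


/-- The functions `ηᵢ, ρᵢ` form the dual basis of the enriched edge functionals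
`D_j, S_j` of the second family. -/
theorem basis_second_family (v : Fin 3 → ℝ × ℝ) (hv : AffineIndependent ℝ v)
    (lam : Fin 3 → ℝ × ℝ → ℝ)
    (hlam : ∀ i, ∃ A : (ℝ × ℝ) →ᵃ[ℝ] ℝ, ∀ x, lam i x = A x)
    (hkr : ∀ i j, lam i (v j) = if i = j then (1:ℝ) else 0)
    (σ μ : ℝ) (hσ : 0 < σ) (hμ : 1 ≤ μ)
    (i j : Fin 3) :
    (∫ t in (-1:ℝ)..1, etaB lam i (edgeParam v j t) * gTilde σ μ t
        = if i = j then (1:ℝ) else 0) ∧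
    (∫ t in (-1:ℝ)..1, qPoly σ μ t * etaB lam i (edgeParam v j t) * gTilde σ μ t = 0) ∧
    (∫ t in (-1:ℝ)..1, rhoB σ μ lam i (edgeParam v j t) * gTilde σ μ t = 0) ∧
    (∫ t in (-1:ℝ)..1, qPoly σ μ t * rhoB σ μ lam i (edgeParam v j t) * gTilde σ μ t
        = if i = j then (1:ℝ) else 0) := by
  have hl : ∀ i t, lam i (edgeParam v j t) = (1 + t) / 2 * (if i = j + 1 then (1:ℝ) else 0)
      + (1 - t) / 2 * (if i = j + 2 then (1:ℝ) else 0) := by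
    intro i t
    obtain ⟨A, hA⟩ := hlam i
    rw [hA, affine_edge, ← hA, ← hA, hkr, hkr]
  have hN := (qNormSq_pos σ μ hσ hμ).ne'
  have hqneg : ∀ t, qPoly σ μ (-t) = qPoly σ μ t := fun t => by simp [qPoly]
  by_cases hij : i = j
  · subst hij
    have he : ∀ t, etaB lam i (edgeParam v i t) = 1 := by
      intro t
      unfold etaB; rw [hl]; fin_cases i <;> simp
    have hr : ∀ t, rhoB σ μ lam i (edgeParam v i t) = qPoly σ μ t / qNormSq σ μ := by
      intro t
      unfold rhoB
      rw [he, hl, hl, hl]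
      unfold Ccoef qPoly
      fin_cases i <;> simp <;> field_simp <;> ring
    refine ⟨?_, ?_, ?_, ?_⟩
    · simp only [he, one_mul, if_true]; exact gTilde_int σ μ hσ hμ
    · simp only [he, mul_one]; exact qInt σ μ hσ hμ
    · simp only [hr]
      have : ∀ t, qPoly σ μ t / qNormSq σ μ * gTilde σ μ t
        = (qNormSq σ μ)⁻¹ * (qPoly σ μ t * gTilde σ μ t) := fun t => by ring
      simp only [this]
      rw [intervalIntegral.integral_const_mul, qInt σ μ hσ hμ, mul_zero]
    · simp only [hr, if_true]
      have : ∀ t, qPoly σ μ t * (qPoly σ μ t / qNormSq σ μ) * gTilde σ μ t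
        = (qNormSq σ μ)⁻¹ * (qPoly σ μ t ^ 2 * gTilde σ μ t) := fun t => by ring
      simp only [this]
      rw [intervalIntegral.integral_const_mul]
      exact inv_mul_cancel₀ hN
  · have he : ∀ t, etaB lam i (edgeParam v j (-t)) = - etaB lam i (edgeParam v j t) := by
      intro t
      unfold etaB; rw [hl, hl]
      fin_cases i <;> fin_cases j <;> simp at hij ⊢ <;> ring
    have hr : ∀ t, rhoB σ μ lam i (edgeParam v j (-t)) = - rhoB σ μ lam i (edgeParam v j t) := by
      intro t
      unfold rhoB
      rw [he]
      simp only [hl]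
      fin_cases i <;> fin_cases j <;> simp at hij ⊢ <;> ring
    simp only [if_neg hij]
    refine ⟨odd_int _ ?_, odd_int _ ?_, odd_int _ ?_, odd_int _ ?_⟩ <;> intro t <;>
      simp only [he, hr, hqneg, gTilde_neg] <;> ring
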